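/- Let T be a computable real number with 0 < T ≤ 1. Then the partition function Z(T) = ∑_{p ∈ dom U} 2^{−|p|/T} converges, and its sum is a left-computable real number which is weakly Chaitin T-random and T-compressible. -/

import Mathlib

open Filter

/-- A set of finite binary strings is prefix-free if no element of it is a
prefix of another (distinct) element of it. -/
def PrefixFree (S : Set (List Bool)) : Prop :=
  ∀ p ∈ S, ∀ q ∈ S, p <+: q → p = q

/-- A computer: a partial recursive function from finite binary strings to
finite binary strings whose domain is a prefix-free set. -/
structure Computer where
  f : List Bool →. List Bool
  partrec : Partrec f
  prefixFree : PrefixFree {p | (f p).Dom}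

/-- The domain of a computer. -/
def Computer.domain (C : Computer) : Set (List Bool) := {p | (C.f p).Dom}

/-- A computer `U` is optimal if every computer can be simulated on `U` with
only a constant increase in program length. -/
def IsOptimal (U : Computer) : Prop :=
  ∀ C : Computer, ∃ d : ℕ, ∀ p : List Bool, (C.f p).Dom →
    ∃ p' : List Bool, p'.length ≤ p.length + d ∧ ∀ s, s ∈ C.f p → s ∈ U.f p'

/-- Program-size complexity `H(s)`: the minimal length of a program `p`
with `U(p) = s`. -/
noncomputable def H (U : Computer) (s : List Bool) : ℕ :=
  sInf {n | ∃ p : List Bool, p.length = n ∧ s ∈ U.f p}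

/-- The `n`-th bit (`n ≥ 1`) of the base-two expansion of `x mod 1`
(the expansion chosen with infinitely many zeros). -/
noncomputable def binDigit (x : ℝ) (n : ℕ) : Bool :=
  decide (⌊Int.fract x * 2 ^ n⌋ % 2 = 1)

/-- The first `n` bits of the base-two expansion of `x mod 1` (with
infinitely many zeros). -/
noncomputable def bits (x : ℝ) (n : ℕ) : List Bool :=
  (List.range n).map fun i => binDigit x (i + 1)

/-- A real `x` is weakly Chaitin `D`-random (w.r.t. the computer `U`). -/
def WeaklyChaitinRandom (U : Computer) (D x : ℝ) : Prop :=
  ∃ c : ℝ, ∀ n : ℕ, 1 ≤ n → D * n - c ≤ (H U (bits x n) : ℝ)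

/-- A real `x` is Chaitin `D`-random (w.r.t. the computer `U`). -/
def ChaitinRandom (U : Computer) (D x : ℝ) : Prop :=
  Tendsto (fun n : ℕ => (H U (bits x n) : ℝ) - D * n) atTop atTop

/-- A real `x` is `D`-compressible (w.r.t. the computer `U`). -/
def DCompressible (U : Computer) (D x : ℝ) : Prop :=
  Filter.limsup (fun n : ℕ => (H U (bits x n) : ℝ) / n) atTop ≤ D

/-- A computable real number. -/
def ComputableReal (T : ℝ) : Prop :=
  ∃ f : ℕ → ℚ, Computable f ∧ ∀ n : ℕ, 1 ≤ n → |T - (f n : ℝ)| < 1 / n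

/-- A right-computable real number. -/
def RightComputable (T : ℝ) : Prop :=
  ∃ g : ℕ → ℚ, Computable g ∧ (∀ n, T ≤ (g n : ℝ)) ∧
    Tendsto (fun n => ((g n : ℚ) : ℝ)) atTop (nhds T)

/-- A left-computable real number. -/
def LeftComputable (T : ℝ) : Prop := RightComputable (-T)

/-- The term `2 ^ (-|p| / T)` of the partition function `Z(T)`. -/
noncomputable def zterm (U : Computer) (T : ℝ) (p : U.domain) : ℝ :=
  (2 : ℝ) ^ (-((p : List Bool).length : ℝ) / T)

/-- The term `|p| ^ Q * 2 ^ (-|p| / T)` of `W(Q,T)`. -/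
noncomputable def wterm (U : Computer) (Q T : ℝ) (p : U.domain) : ℝ :=
  ((p : List Bool).length : ℝ) ^ Q * (2 : ℝ) ^ (-((p : List Bool).length : ℝ) / T)

/-- The term `|p| * 2 ^ (-|p| / T)` of `W(1,T)`. -/
noncomputable def wlterm (U : Computer) (T : ℝ) (p : U.domain) : ℝ :=
  ((p : List Bool).length : ℝ) * (2 : ℝ) ^ (-((p : List Bool).length : ℝ) / T)

/-- The term `|p| ^ 2 * 2 ^ (-|p| / T)` of `W(2,T)`. -/
noncomputable def wsqterm (U : Computer) (T : ℝ) (p : U.domain) : ℝ :=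
  ((p : List Bool).length : ℝ) ^ 2 * (2 : ℝ) ^ (-((p : List Bool).length : ℝ) / T)

/-- A lower-computable function `f : ℕ⁺ → [0,∞)` (represented on `ℕ`,
with all conditions imposed on positive arguments). -/
def LowerComputableFun (f : ℕ → ℝ) : Prop :=
  ∃ a : ℕ → ℕ → ℚ, Computable₂ a ∧
    (∀ k n : ℕ, 1 ≤ k → 1 ≤ n → (a k n : ℝ) ≤ f n) ∧
    (∀ n : ℕ, 1 ≤ n → Tendsto (fun k => ((a k n : ℚ) : ℝ)) atTop (nhds (f n)))

/-- A lower-computable semi-measure on finite binary strings. -/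
def LowerComputableSemiMeasure (r : List Bool → ℝ) : Prop :=
  (∀ s, 0 ≤ r s) ∧ (∀ s, r s ≤ 1) ∧ Summable r ∧ (∑' s, r s) ≤ 1 ∧
    ∃ f : ℕ → List Bool → ℚ, Computable₂ f ∧
      (∀ n s, ((f n s : ℚ) : ℝ) ≤ r s) ∧
      (∀ s, Tendsto (fun n => ((f n s : ℚ) : ℝ)) atTop (nhds (r s)))

/-- A universal probability. -/
def UniversalProbability (m : List Bool → ℝ) : Prop :=
  LowerComputableSemiMeasure m ∧
    ∀ r : List Bool → ℝ, LowerComputableSemiMeasure r →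
      ∃ c : ℝ, 0 < c ∧ ∀ s, c * r s ≤ m s

/-!
Since `zterm U T p = (zterm U 1 p) ^ (1 / T)` with `1 / T ≥ 1`, convergence follows from Kraft's
inequality `Ω = Z(1) ≤ 1`. Moreover a tail of `Z(T)` is at most the corresponding tail of `Ω`
raised to the power `1 / T`. Let `Z_s` and `Ω_s` be the sums over the programs found to halt within
`s` steps.

Randomness: the first `n` bits of `Z = Z(T)` let one find a stage `s` with
`Z - Z_s ≤ 2 ^ (2 - n)`, and then a string `y` that no program found by stage `s` outputs. A
shortest program `p` for `y` therefore contributes to `Z - Z_s`, so `2 ^ (-|p| / T) ≤ 2 ^ (2 - n)`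
and `|p| ≥ T (n - 2)`, while `|p| ≤ H(Z_n) + O(1)`.

Compressibility: about `T n` bits of `Ω` let one find a stage `s` with `Ω - Ω_s ≤ 2 ^ (-T n)`. The
power bound on tails then gives `Z - Z_s ≤ 2⁻ⁿ`, so `Z_s` determines `Z_n` up to boundedly many
candidates. A self-delimiting code for `n` costs only `O(√n)` further bits.
-/

section Search

variable {α β : Type*} [Primcodable α] [Primcodable β]

theorem primrecPred_to_comp {p : α → Prop} (hp : PrimrecPred p) : ComputablePred p :=
  let ⟨_, hp⟩ := hp
  ⟨fun _ => inferInstance, hp.to_comp⟩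

theorem computablePred_comp {p : β → Prop} {f : α → β} (hp : ComputablePred p)
    (hf : Computable f) : ComputablePred fun a => p (f a) :=
  let ⟨_, hp⟩ := hp
  ⟨fun _ => inferInstance, hp.comp hf⟩

theorem computablePred_and {p q : α → Prop} (hp : ComputablePred p) (hq : ComputablePred q) :
    ComputablePred fun a => p a ∧ q a := by
  obtain ⟨_, hp⟩ := hp
  obtain ⟨_, hq⟩ := hq
  exact ⟨fun _ => inferInstance,
    (Primrec.and.to_comp.comp hp hq).of_eq fun a => (Bool.decide_and (p a) (q a)).symm⟩

theorem exists_partrec_search {r : α → β → Prop}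
    (hr : ComputablePred fun x : α × β => r x.1 x.2) :
    ∃ g : α →. β, Partrec g ∧ (∀ a, ∀ b ∈ g a, r a b) ∧ ∀ a b, r a b → (g a).Dom := by
  obtain ⟨test, htest, mem_test⟩ : ∃ test : α → ℕ → Option β, Computable₂ test ∧
      ∀ a n b, b ∈ test a n ↔ Encodable.decode n = some b ∧ r a b := by
    obtain ⟨_, hr⟩ := hr
    refine ⟨fun a n => (Encodable.decode n).bind fun b =>
        bif decide ((fun x : α × β => r x.1 x.2) (a, b)) then some b else none,
      Computable.option_bind (Computable.decode.comp Computable.snd)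
        (Computable.cond (hr.comp ((Computable.fst.comp Computable.fst).pair Computable.snd))
          (Computable.option_some.comp Computable.snd) (Computable.const none)), ?_⟩
    simp +contextual [Option.bind_eq_some_iff, cond_eq_ite, and_comm]
  refine ⟨fun a => Nat.rfindOpt (test a), Partrec.rfindOpt htest, fun a b hb => ?_,
    fun a b hab =>
      Nat.rfindOpt_dom.2 ⟨Encodable.encode b, b, (mem_test ..).2 ⟨Encodable.encodek b, hab⟩⟩⟩
  obtain ⟨n, hn⟩ := Nat.rfindOpt_spec hb
  exact ((mem_test ..).1 hn).2

theorem exists_computable_search {r : α → β → Prop}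
    (hr : ComputablePred fun x : α × β => r x.1 x.2) (hex : ∀ a, ∃ b, r a b) :
    ∃ g : α → β, Computable g ∧ ∀ a, r a (g a) := by
  obtain ⟨g, hg, hsound, hdom⟩ := exists_partrec_search hr
  have htot (a : α) : (g a).Dom := (hex a).elim fun b => hdom a b
  exact ⟨fun a => (g a).get (htot a), hg.of_eq_tot fun a => Part.get_mem (htot a),
    fun a => hsound a _ (Part.get_mem (htot a))⟩

theorem computable_of_graph {f : α → β} (hf : ComputablePred fun x : α × β => f x.1 = x.2) :
    Computable f := by
  obtain ⟨g, hg, hfg⟩ := exists_computable_search hf fun a => ⟨f a, rfl⟩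
  exact hg.of_eq fun a => (hfg a).symm

theorem exists_computable_notMem [Infinite β] :
    ∃ w : List β → β, Computable w ∧ ∀ l, w l ∉ l := by
  have hmem : PrimrecRel fun (l : List β) (b : β) => ∃ c ∈ l, c = b :=
    PrimrecRel.exists_mem_list Primrec.eq
  exact exists_computable_search (r := fun l b => b ∉ l)
    ((primrecPred_to_comp hmem.not).of_eq fun x => by simp)
    fun l => by classical simpa using Infinite.exists_notMem_finset l.toFinset

theorem computable₂_add : Computable₂ ((· + ·) : ℕ → ℕ → ℕ) := Primrec.nat_add.to_comp
theorem computable₂_sub : Computable₂ ((· - ·) : ℕ → ℕ → ℕ) := Primrec.nat_sub.to_comp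
theorem computable₂_mul : Computable₂ ((· * ·) : ℕ → ℕ → ℕ) := Primrec.nat_mul.to_comp
theorem computable₂_div : Computable₂ ((· / ·) : ℕ → ℕ → ℕ) := Primrec.nat_div.to_comp
theorem computable₂_pow : Computable₂ ((· ^ ·) : ℕ → ℕ → ℕ) :=
  (Primrec₂.unpaired'.1 Nat.Primrec.pow).to_comp

theorem computable_list_map_sum {f : α → List β} {g : α → β → ℕ} (hf : Computable f)
    (hg : Computable₂ g) : Computable fun a => ((f a).map (g a)).sum := by
  let partialSum (a : α) (k : ℕ) : ℕ :=
    Nat.rec 0 (fun i s => s + ((f a)[i]?.map (g a)).getD 0) k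
  have hterm : Computable₂ fun (a : α) (i : ℕ) => ((f a)[i]?.map (g a)).getD 0 :=
    Computable.option_getD
      (Computable.option_map (Computable.list_getElem?.comp (hf.comp Computable.fst) Computable.snd)
        (hg.comp (Computable.fst.comp Computable.fst) Computable.snd))
      (Computable.const 0)
  have hpartialSum : Computable fun a => partialSum a (f a).length :=
    Computable.nat_rec (Computable.list_length.comp hf) (Computable.const 0)
      (computable₂_add.comp (Computable.snd.comp Computable.snd)
        (hterm.comp Computable.fst (Computable.fst.comp Computable.snd))).to₂
  have partialSum_eq (a : α) (k : ℕ) : partialSum a k = (((f a).map (g a)).take k).sum := by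
    induction k with
    | zero => simp [partialSum]
    | succ k ih =>
      simp only [List.take_add_one, List.sum_append, ← ih, List.getElem?_map]
      cases h : (f a)[k]? <;> simp [partialSum, h]
  exact hpartialSum.of_eq fun a => by rw [partialSum_eq, List.take_of_length_le (by simp)]

end Search

section Rational

open Encodable

theorem encode_ofEncodableOfInfinite {α : Type*} [Encodable α] [Infinite α]
    [DecidablePred (· ∈ Set.range (encode : α → ℕ))] (a : α) :
    (Denumerable.ofEncodableOfInfinite α).toEncodable.encode a =
      ((List.range (encode a)).filter (· ∈ Set.range (encode : α → ℕ))).length := by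
  obtain rfl := Subsingleton.elim ‹DecidablePred (· ∈ Set.range (encode : α → ℕ))›
    (decidableRangeEncode α)
  exact List.countP_eq_length_filter

theorem primrecRel_coprime : PrimrecRel Nat.Coprime := by
  have hdvd : PrimrecRel fun d n : ℕ => d ∣ n :=
    (Primrec.eq.comp (Primrec.nat_mod.comp Primrec.snd Primrec.fst) (Primrec.const 0)).of_eq
      fun x => (Nat.dvd_iff_mod_eq_zero ..).symm
  have hcommon : PrimrecRel fun (d : ℕ) (x : ℕ × ℕ) => ¬(d ∣ x.1 ∧ d ∣ x.2) ∨ d = 1 :=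
    ((hdvd.comp Primrec.fst (Primrec.fst.comp Primrec.snd)).and
      (hdvd.comp Primrec.fst (Primrec.snd.comp Primrec.snd))).not.or
        (Primrec.eq.comp Primrec.fst (Primrec.const 1))
  refine (hcommon.forall_mem_list.comp
    (Primrec.list_range.comp (Primrec.succ.comp Primrec.nat_add)) Primrec.id).of_eq fun (a, b) => ?_
  simp only [← imp_iff_not_or]
  refine ⟨fun h => h _ ?_ ⟨Nat.gcd_dvd_left a b, Nat.gcd_dvd_right a b⟩,
    fun h d _ hd => Nat.eq_one_of_dvd_coprimes h hd.1 hd.2⟩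
  rcases Nat.eq_zero_or_pos a with rfl | ha
  · simp
  · exact List.mem_range.2 (Nat.lt_succ_of_le ((Nat.gcd_le_left b ha).trans (Nat.le_add_right a b)))

theorem encode_int (z : ℤ) : encode z = 2 * z.toNat + (2 * (-z).toNat - 1) := by
  cases z with
  | ofNat n =>
    change 2 * n = 2 * n + (2 * (-(n : ℤ)).toNat - 1)
    omega
  | negSucc n =>
    change 2 * n + 1 = 2 * 0 + (2 * (n + 1) - 1)
    omega

theorem natAbs_eq_encode (z : ℤ) : z.natAbs = (encode z + 1) / 2 := by
  rw [encode_int]; omega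

theorem toNat_eq_encode (z : ℤ) : z.toNat = (1 - encode z % 2) * (encode z / 2) := by
  rw [encode_int]
  rcases le_total z 0 with hz | hz
  · rcases hz.lt_or_eq with hz | rfl
    · have : (2 * z.toNat + (2 * (-z).toNat - 1)) % 2 = 1 := by omega
      rw [this]; omega
    · rfl
  · have : (2 * z.toNat + (2 * (-z).toNat - 1)) % 2 = 0 := by omega
    rw [this]; omega

theorem primrec_int_natAbs : Primrec Int.natAbs :=
  (Primrec.nat_div.comp (Primrec.succ.comp Primrec.encode) (Primrec.const 2)).of_eq fun z =>
    (natAbs_eq_encode z).symm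

theorem primrec_int_toNat : Primrec Int.toNat :=
  (Primrec.nat_mul.comp
    (Primrec.nat_sub.comp (Primrec.const 1)
      (Primrec.nat_mod.comp Primrec.encode (Primrec.const 2)))
    (Primrec.nat_div.comp Primrec.encode (Primrec.const 2))).of_eq fun z =>
      (toNat_eq_encode z).symm

/-- The code of a rational number from which Mathlib's `Primcodable ℚ` is obtained by counting
the smaller codes. -/
def ratCode (q : ℚ) : ℕ := Nat.pair (encode q.num) q.den

theorem mem_range_ratCode (c : ℕ) : c ∈ Set.range ratCode ↔
    0 < c.unpair.2 ∧ ((c.unpair.1 + 1) / 2).Coprime c.unpair.2 := by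
  constructor
  · rintro ⟨q, rfl⟩
    rw [ratCode, Nat.unpair_pair, ← natAbs_eq_encode]
    exact ⟨q.den_pos, q.reduced⟩
  · rintro ⟨hpos, hcop⟩
    have hz := Denumerable.encode_ofNat (α := ℤ) c.unpair.1
    rw [← hz, ← natAbs_eq_encode] at hcop
    refine ⟨⟨Denumerable.ofNat ℤ c.unpair.1, c.unpair.2, hpos.ne', hcop⟩, ?_⟩
    rw [ratCode, hz, Nat.pair_unpair]

theorem encode_rat (q : ℚ) [dec : DecidablePred (· ∈ Set.range ratCode)] :
    (Primcodable.toEncodable : Encodable ℚ).encode q =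
      ((List.range (ratCode q)).filter (· ∈ Set.range ratCode)).length :=
  @encode_ofEncodableOfInfinite ℚ Rat.instEncodable _ dec q

theorem computable_ratCode : Computable ratCode := by
  have hrange : PrimrecPred (· ∈ Set.range ratCode) :=
    ((Primrec.nat_lt.comp (Primrec.const 0) (Primrec.snd.comp Primrec.unpair)).and
      (primrecRel_coprime.comp (Primrec.nat_div.comp
        (Primrec.succ.comp (Primrec.fst.comp Primrec.unpair)) (Primrec.const 2))
        (Primrec.snd.comp Primrec.unpair))).of_eq fun c => (mem_range_ratCode c).symm
  classical
  have hcount : Primrec fun c => ((List.range c).filter (· ∈ Set.range ratCode)).length :=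
    Primrec.list_length.comp ((Primrec.listFilter hrange).comp Primrec.list_range)
  refine computable_of_graph ((computablePred_and
    (computablePred_comp (primrecPred_to_comp hrange) Computable.snd)
    (computablePred_comp (primrecPred_to_comp Primrec.eq) ((hcount.to_comp.comp Computable.snd).pair
      (Computable.encode.comp Computable.fst)))).of_eq fun (q, c) => ?_)
  change c ∈ _ ∧ List.length _ = _ ↔ ratCode q = c
  constructor
  · rintro ⟨⟨q', rfl⟩, hq⟩
    rw [← encode_rat q'] at hq
    exact congrArg ratCode (@encode_injective ℚ Primcodable.toEncodable _ _ hq).symm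
  · rintro rfl
    exact ⟨⟨q, rfl⟩, (encode_rat q).symm⟩

theorem computable_rat_den : Computable Rat.den :=
  (Computable.snd.comp (Computable.unpair.comp computable_ratCode)).of_eq fun q => by
    simp [ratCode]

theorem computable_rat_num : Computable Rat.num :=
  ((Primrec.ofNat ℤ).to_comp.comp
    (Computable.fst.comp (Computable.unpair.comp computable_ratCode))).of_eq fun q => by
      rw [ratCode, Nat.unpair_pair, Denumerable.ofNat_encode]

theorem computable_neg_natCast_div {α : Type*} [Primcodable α] {a b : α → ℕ} (ha : Computable a)
    (hb : Computable b) (hb0 : ∀ x, 0 < b x) : Computable fun x => -((a x : ℚ) / b x) := by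
  have hnum : Computable fun x : α × ℚ => x.2.num := computable_rat_num.comp Computable.snd
  have hden : Computable fun x : α × ℚ => x.2.den := computable_rat_den.comp Computable.snd
  refine computable_of_graph ((computablePred_and
    (computablePred_comp (primrecPred_to_comp Primrec.eq)
      ((primrec_int_toNat.to_comp.comp hnum).pair (Computable.const 0)))
    (computablePred_comp (primrecPred_to_comp Primrec.eq)
      ((computable₂_mul.comp (primrec_int_natAbs.to_comp.comp hnum) (hb.comp Computable.fst)).pair
        (computable₂_mul.comp (ha.comp Computable.fst) hden)))).of_eq fun (x, q) => ?_)
  change q.num.toNat = 0 ∧ q.num.natAbs * b x = a x * q.den ↔ -((a x : ℚ) / b x) = q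
  have hbx : (b x : ℚ) ≠ 0 := by exact_mod_cast (hb0 x).ne'
  have hq : (q.den : ℚ) ≠ 0 := by exact_mod_cast q.den_pos.ne'
  have cross : -((a x : ℚ) / b x) = q ↔ -(a x : ℤ) * q.den = q.num * b x := by
    rw [← neg_div]
    nth_rw 1 [← q.num_div_den]
    rw [div_eq_div_iff hbx hq]
    exact_mod_cast Iff.rfl
  rw [Int.toNat_eq_zero]
  constructor
  · rintro ⟨hsign, habs⟩
    zify [abs_of_nonpos hsign] at habs
    exact cross.2 (by linarith)
  · intro h
    have hsign : q.num ≤ 0 := Rat.num_nonpos.2 (h ▸ neg_nonpos.2 (by positivity))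
    refine ⟨hsign, ?_⟩
    zify [abs_of_nonpos hsign]
    linarith [cross.1 h]

end Rational

section ComputableFamily

variable {ι κ : Type*} [Primcodable ι] [Primcodable κ] {x : ι → ℝ}

/-- A family of nonnegative reals that can be approximated uniformly: the computable `b i n` is the
numerator of a dyadic lower bound of `x i`, with denominator `2 ^ n`. The error allowed is `2` units
rather than `1` because floors of computable reals are not computable. -/
def ComputableFamily (x : ι → ℝ) : Prop :=
  ∃ b : ι → ℕ → ℕ, Computable₂ b ∧ ∀ i n, (b i n : ℝ) ≤ 2 ^ n * x i ∧ 2 ^ n * x i ≤ b i n + 2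

theorem ComputableFamily.comp (hx : ComputableFamily x) {f : κ → ι} (hf : Computable f) :
    ComputableFamily fun j => x (f j) :=
  let ⟨b, hbc, hb⟩ := hx
  ⟨fun j => b (f j), hbc.comp (hf.comp Computable.fst) Computable.snd, fun j => hb (f j)⟩

theorem computableFamily_of_quotient {p q : ι → ℕ → ℕ} (hp : Computable₂ p) (hq : Computable₂ q)
    (hq0 : ∀ i n, 0 < q i n)
    (hx : ∀ i n, (p i n : ℝ) / q i n ≤ 2 ^ n * x i ∧ 2 ^ n * x i ≤ p i n / q i n + 1) :
    ComputableFamily x := by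
  refine ⟨fun i n => p i n / q i n, computable₂_div.comp hp hq, fun i n => ?_⟩
  have hlower : ((p i n / q i n : ℕ) : ℝ) ≤ p i n / q i n := Nat.cast_div_le
  have hupper : (p i n : ℝ) / q i n < (p i n / q i n : ℕ) + 1 := by
    rw [div_lt_iff₀ (by exact_mod_cast hq0 i n)]
    exact_mod_cast Nat.lt_mul_of_div_lt (Nat.lt_succ_self _) (hq0 i n)
  constructor <;> linarith [hx i n]

theorem natCast_sub_eq_max (a b : ℕ) : ((a - b : ℕ) : ℝ) = max (a - b : ℝ) 0 := by
  rcases le_total a b with h | h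
  · rw [Nat.sub_eq_zero_of_le h, max_eq_right (sub_nonpos.2 (Nat.cast_le.2 h)),
      Nat.cast_zero]
  · rw [Nat.cast_sub h, max_eq_left (sub_nonneg.2 (Nat.cast_le.2 h))]

theorem ratCast_toNat_div (q : ℚ) : (q.num.toNat : ℝ) / q.den = max (q : ℝ) 0 := by
  have hcast : (q.num.toNat : ℝ) = max (q.num : ℝ) 0 := by exact_mod_cast Int.toNat_eq_max q.num
  rw [hcast, ← max_div_div_right q.den.cast_nonneg, zero_div, ← Rat.cast_def]

theorem ComputableReal.computableFamily {T : ℝ} (hT : ComputableReal T) (hT0 : 0 ≤ T) :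
    ComputableFamily fun _ : ι => T := by
  obtain ⟨f, hfc, hf⟩ := hT
  let y (n : ℕ) : ℚ := f (2 ^ (n + 1))
  have hyc : Computable fun x : ι × ℕ => y x.2 :=
    hfc.comp (computable₂_pow.comp (Computable.const 2) (Computable.succ.comp Computable.snd))
  have hy (n : ℕ) : |2 ^ (n + 1) * T - 2 ^ (n + 1) * max (y n : ℝ) 0| ≤ 1 := by
    have hpos : (0 : ℝ) < 2 ^ (n + 1) := by positivity
    have hfT : |T - y n| < 1 / 2 ^ (n + 1) := by exact_mod_cast hf (2 ^ (n + 1)) Nat.one_le_two_pow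
    rw [← mul_sub, abs_mul, abs_of_pos hpos, ← le_div_iff₀' hpos]
    simpa only [max_eq_left hT0] using (abs_max_sub_max_le_abs T (y n : ℝ) 0).trans hfT.le
  have hp : Computable fun x : ι × ℕ => 2 ^ (x.2 + 1) * (y x.2).num.toNat - (y x.2).den :=
    computable₂_sub.comp (computable₂_mul.comp
      (computable₂_pow.comp (Computable.const 2) (Computable.succ.comp Computable.snd))
      (primrec_int_toNat.to_comp.comp (computable_rat_num.comp hyc)))
      (computable_rat_den.comp hyc)
  refine computableFamily_of_quotient
    (p := fun _ n => 2 ^ (n + 1) * (y n).num.toNat - (y n).den) (q := fun _ n => 2 * (y n).den) hp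
    (computable₂_mul.comp (Computable.const 2) (computable_rat_den.comp hyc))
    (fun _ n => by positivity) fun _ n => ?_
  have hden : (0 : ℝ) < (y n).den := by exact_mod_cast (y n).den_pos
  have hsub : ((2 ^ (n + 1) * (y n).num.toNat - (y n).den : ℕ) : ℝ) / (y n).den =
      max (2 ^ (n + 1) * max (y n : ℝ) 0 - 1) 0 := by
    rw [← ratCast_toNat_div, natCast_sub_eq_max, ← max_div_div_right hden.le]
    push_cast
    rw [sub_div, div_self hden.ne', mul_div_assoc, zero_div]
  have hT2 : 2 * (2 ^ n * T) = 2 ^ (n + 1) * T := by rw [← mul_assoc, pow_succ']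
  have hT0' : 0 ≤ 2 ^ (n + 1) * T := by positivity
  obtain ⟨hlower, hupper⟩ := abs_le.1 (hy n)
  rw [Nat.cast_mul, mul_comm (Nat.cast 2), ← div_div, hsub, Nat.cast_two, div_le_iff₀ two_pos,
    div_add_one two_ne_zero, le_div_iff₀ two_pos, mul_comm (2 ^ n * T), hT2]
  refine ⟨max_le (by linarith) hT0', ?_⟩
  linarith [le_max_left (2 ^ (n + 1) * max (y n : ℝ) 0 - 1) 0]

theorem ComputableFamily.list_sum (hx : ComputableFamily x) {f : κ → List ι} (hf : Computable f) :
    ComputableFamily fun j => ((f j).map x).sum := by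
  obtain ⟨b, hbc, hb⟩ := hx
  have hlen : Computable fun y : κ × ℕ => (f y.1).length + 1 :=
    Computable.succ.comp (Computable.list_length.comp (hf.comp Computable.fst))
  refine computableFamily_of_quotient
    (p := fun j n => ((f j).map fun i => b i (n + ((f j).length + 1))).sum)
    (q := fun j _ => 2 ^ ((f j).length + 1))
    (computable_list_map_sum (hf.comp Computable.fst) (hbc.comp Computable.snd
      ((computable₂_add.comp Computable.snd hlen).comp Computable.fst)))
    (computable₂_pow.comp (Computable.const 2) hlen)
    (fun _ _ => by positivity) fun j n => ?_
  have hsum (k : ℕ) (l : List ι) : ((l.map fun i => b i k).sum : ℕ) ≤ 2 ^ k * (l.map x).sum ∧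
      2 ^ k * (l.map x).sum ≤ (l.map fun i => b i k).sum + 2 * l.length := by
    induction l with
    | nil => simp
    | cons i l ih =>
      simp only [List.map_cons, List.sum_cons, List.length_cons, Nat.cast_add, Nat.cast_one]
      constructor <;> linarith [hb i k]
  have hlt : ((f j).length : ℝ) ≤ 2 ^ (f j).length := by exact_mod_cast Nat.lt_two_pow_self.le
  have hq : (0 : ℝ) < 2 ^ ((f j).length + 1) := by positivity
  specialize hsum (n + ((f j).length + 1)) (f j)
  rw [pow_add, mul_right_comm] at hsum
  rw [Nat.cast_pow, Nat.cast_two, div_le_iff₀ hq, div_add_one hq.ne', le_div_iff₀ hq]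
  refine ⟨hsum.1, hsum.2.trans ?_⟩
  gcongr
  rw [pow_succ']
  gcongr

theorem ComputableFamily.leftComputable_of_tendsto {x : ℕ → ℝ} (hx : ComputableFamily x) {z : ℝ}
    (hle : ∀ s, x s ≤ z) (hlim : Tendsto x atTop (nhds z)) : LeftComputable z := by
  obtain ⟨b, hbc, hb⟩ := hx
  refine ⟨fun s => -((b s s : ℚ) / (2 ^ s : ℕ)), computable_neg_natCast_div
    (hbc.comp Computable.id Computable.id) (computable₂_pow.comp (Computable.const 2) Computable.id)
    (fun _ => by positivity), ?_⟩
  have hdiv (s : ℕ) : x s - 2 * (1 / 2) ^ s ≤ b s s / 2 ^ s ∧ (b s s : ℝ) / 2 ^ s ≤ x s := by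
    have hpow : (0 : ℝ) < 2 ^ s := by positivity
    rw [le_div_iff₀ hpow, div_le_iff₀ hpow, sub_mul, mul_assoc, ← mul_pow]
    norm_num
    constructor <;> linarith [hb s s]
  push_cast
  refine ⟨fun s => neg_le_neg ((hdiv s).2.trans (hle s)), Tendsto.neg ?_⟩
  have hlower : Tendsto (fun s => x s - 2 * (1 / 2) ^ s) atTop (nhds z) := by
    simpa using hlim.sub
      ((tendsto_pow_atTop_nhds_zero_of_lt_one one_half_pos.le one_half_lt_one).const_mul (2 : ℝ))
  exact tendsto_of_tendsto_of_tendsto_of_le_of_le hlower hlim (fun s => (hdiv s).1)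
    fun s => (hdiv s).2

theorem ComputableFamily.exists_partrec_stage {x : ℕ → ℝ} (hx : ComputableFamily x) :
    ∃ g : ℕ × ℕ →. ℕ, Partrec g ∧ (∀ n N, ∀ s ∈ g (n, N), (N : ℝ) ≤ 2 ^ n * x s + 2) ∧
      ∀ z, Tendsto x atTop (nhds z) → ∀ n N : ℕ, (N : ℝ) ≤ 2 ^ n * z → (g (n, N)).Dom := by
  obtain ⟨b, hbc, hb⟩ := hx
  obtain ⟨g, hg, hsound, hdom⟩ := exists_partrec_search
    (r := fun (y : ℕ × ℕ) s => y.2 ≤ b s y.1 + 2)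
    (computablePred_comp (primrecPred_to_comp Primrec.nat_le)
      ((Computable.snd.comp Computable.fst).pair (computable₂_add.comp
        (hbc.comp Computable.snd (Computable.fst.comp Computable.fst)) (Computable.const 2))))
  refine ⟨g, hg, fun n N s hs => ?_, fun z hz n N hN => ?_⟩
  · have hle : (N : ℝ) ≤ b s n + 2 := by exact_mod_cast hsound _ s hs
    linarith [(hb s n).1]
  · obtain ⟨s, hs⟩ := ((hz.const_mul (2 ^ n)).eventually_const_lt
      (show 2 ^ n * z - 1 < 2 ^ n * z by linarith)).exists
    refine hdom _ s (Nat.lt_succ_iff.1 ?_)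
    rify
    linarith [(hb s n).2]

theorem two_pow_mul_rpow_pow_mul (l m n : ℕ) {i : ℕ} (hi : 0 < i) :
    (2 ^ n * (2 : ℝ) ^ (-(l * (m / i) : ℝ))) ^ i * 2 ^ (l * m) = 2 ^ (n * i) := by
  have hi' : (i : ℝ) ≠ 0 := by exact_mod_cast hi.ne'
  rw [mul_pow, ← Real.rpow_mul_natCast zero_le_two, ← Real.rpow_natCast 2 (l * m), mul_assoc,
    ← Real.rpow_add zero_lt_two, ← pow_mul]
  have hexp : -(l * (m / i) : ℝ) * i + (l * m : ℕ) = 0 := by push_cast; field_simp; ring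
  rw [hexp, Real.rpow_zero, mul_one]

theorem le_two_pow_mul_rpow_iff (l m n c : ℕ) {i : ℕ} (hi : 0 < i) :
    (c : ℝ) ≤ 2 ^ n * (2 : ℝ) ^ (-(l * (m / i) : ℝ)) ↔ c ^ i * 2 ^ (l * m) ≤ 2 ^ (n * i) := by
  rw [← pow_le_pow_iff_left₀ c.cast_nonneg (by positivity) hi.ne',
    ← mul_le_mul_iff_left₀ (show (0 : ℝ) < 2 ^ (l * m) by positivity),
    two_pow_mul_rpow_pow_mul l m n hi]
  exact_mod_cast Iff.rfl

theorem two_pow_mul_rpow_le_iff (l m n c : ℕ) {i : ℕ} (hi : 0 < i) :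
    2 ^ n * (2 : ℝ) ^ (-(l * (m / i) : ℝ)) ≤ c ↔ 2 ^ (n * i) ≤ c ^ i * 2 ^ (l * m) := by
  rw [← pow_le_pow_iff_left₀ (by positivity) c.cast_nonneg hi.ne',
    ← mul_le_mul_iff_left₀ (show (0 : ℝ) < 2 ^ (l * m) by positivity),
    two_pow_mul_rpow_pow_mul l m n hi]
  exact_mod_cast Iff.rfl

theorem two_rpow_neg_mul_le {T : ℝ} (hT0 : 0 < T) (l : ℕ) {m i : ℝ} (hi : 0 < i) (h : i ≤ m * T) :
    (2 : ℝ) ^ (-(l * (m / i))) ≤ 2 ^ (-(l : ℝ) / T) := by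
  refine Real.rpow_le_rpow_of_exponent_le one_le_two ?_
  rw [neg_div, div_eq_mul_one_div (l : ℝ)]
  refine neg_le_neg (mul_le_mul_of_nonneg_left ?_ l.cast_nonneg)
  rwa [div_le_div_iff₀ hT0 hi, one_mul]

theorem le_two_rpow_neg_mul {T : ℝ} (hT0 : 0 < T) (l : ℕ) {m i : ℝ} (hi : 0 < i) (h : m * T ≤ i) :
    (2 : ℝ) ^ (-(l : ℝ) / T) ≤ 2 ^ (-(l * (m / i))) := by
  refine Real.rpow_le_rpow_of_exponent_le one_le_two ?_
  rw [neg_div, div_eq_mul_one_div (l : ℝ)]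
  refine neg_le_neg (mul_le_mul_of_nonneg_left ?_ l.cast_nonneg)
  rwa [div_le_div_iff₀ hi hT0, one_mul]

theorem tendsto_two_pow_mul_two_rpow {T : ℝ} (hT0 : 0 < T) {b : ℕ → ℕ}
    (hb : ∀ k, (b k : ℝ) ≤ 2 ^ k * T ∧ 2 ^ k * T ≤ b k + 2) (l n j : ℕ) :
    Tendsto (fun k => 2 ^ n * (2 : ℝ) ^ (-(l * ((2 ^ k : ℕ) / (b k + j : ℕ)) : ℝ))) atTop
      (nhds (2 ^ n * 2 ^ (-(l : ℝ) / T))) := by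
  have hzero (c : ℝ) : Tendsto (fun k => c * (1 / 2) ^ k) atTop (nhds 0) := by
    simpa using
      (tendsto_pow_atTop_nhds_zero_of_lt_one one_half_pos.le one_half_lt_one).const_mul c
  have happrox : Tendsto (fun k => ((b k + j : ℕ) : ℝ) / (2 ^ k : ℕ)) atTop (nhds T) := by
    have hlower : Tendsto (fun k => T - 2 * (1 / 2) ^ k) atTop (nhds T) := by
      simpa using (hzero 2).const_sub T
    have hupper : Tendsto (fun k => T + j * (1 / 2) ^ k) atTop (nhds T) := by
      simpa using (hzero j).const_add T
    refine tendsto_of_tendsto_of_tendsto_of_le_of_le hlower hupper (fun k => ?_) fun k => ?_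
    all_goals
      have hpow : (0 : ℝ) < 2 ^ k := by positivity
      push_cast
    · rw [le_div_iff₀ hpow, sub_mul, mul_assoc, ← mul_pow]
      norm_num
      linarith [hb k, j.cast_nonneg (α := ℝ)]
    · rw [div_le_iff₀ hpow, add_mul, mul_assoc, ← mul_pow]
      norm_num
      linarith [hb k]
  have hexp : Tendsto (fun k => -(l * ((2 ^ k : ℕ) / (b k + j : ℕ)) : ℝ)) atTop
      (nhds (-(l : ℝ) / T)) := by
    simpa only [inv_div, neg_div, div_eq_mul_inv (l : ℝ)] using
      ((happrox.inv₀ hT0.ne').const_mul (l : ℝ)).neg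
  exact (((Real.continuous_const_rpow two_ne_zero).tendsto _).comp hexp).const_mul _

theorem exists_two_rpow_bracket {T : ℝ} (hT0 : 0 < T) {b : ℕ → ℕ}
    (hb : ∀ k, (b k : ℝ) ≤ 2 ^ k * T ∧ 2 ^ k * T ≤ b k + 2) (l n : ℕ) : ∃ k c : ℕ, 0 < b k ∧
      c ≤ 2 ^ n * (2 : ℝ) ^ (-(l * ((2 ^ k : ℕ) / b k) : ℝ)) ∧
      2 ^ n * (2 : ℝ) ^ (-(l * ((2 ^ k : ℕ) / (b k + 2 : ℕ)) : ℝ)) ≤ (c + 2 : ℕ) := by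
  set y : ℝ := 2 ^ n * 2 ^ (-(l : ℝ) / T)
  have hy0 : 0 < ⌈y⌉₊ := Nat.ceil_pos.2 (by positivity)
  obtain ⟨c, hc⟩ := Nat.exists_eq_succ_of_ne_zero hy0.ne'
  have hcy : (c : ℝ) < y := Nat.lt_ceil.1 (by omega)
  have hyc : y < (c + 2 : ℕ) :=
    (Nat.le_ceil y).trans_lt (by rw [hc]; exact_mod_cast Nat.lt_succ_self _)
  have hlim := tendsto_two_pow_mul_two_rpow hT0 hb l n
  have hpos : ∀ᶠ k in atTop, 2 < 2 ^ k * T :=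
    ((tendsto_pow_atTop_atTop_of_one_lt one_lt_two).atTop_mul_const hT0).eventually_gt_atTop 2
  obtain ⟨k, hk, hk0, hk2⟩ := (hpos.and (((hlim 0).eventually_const_lt hcy).and
    ((hlim 2).eventually_lt_const hyc))).exists
  refine ⟨k, c, ?_, hk0.le, hk2.le⟩
  rify
  linarith [hb k]

theorem computablePred_two_rpow_bracket {b : ℕ → ℕ} (hb : Computable b) :
    ComputablePred fun x : (ℕ × ℕ) × ℕ × ℕ => 0 < b x.2.1 ∧
      x.2.2 ^ b x.2.1 * 2 ^ (x.1.1 * 2 ^ x.2.1) ≤ 2 ^ (x.1.2 * b x.2.1) ∧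
      2 ^ (x.1.2 * (b x.2.1 + 2)) ≤ (x.2.2 + 2) ^ (b x.2.1 + 2) * 2 ^ (x.1.1 * 2 ^ x.2.1) := by
  have hl : Computable fun x : (ℕ × ℕ) × ℕ × ℕ => x.1.1 := Computable.fst.comp Computable.fst
  have hn : Computable fun x : (ℕ × ℕ) × ℕ × ℕ => x.1.2 := Computable.snd.comp Computable.fst
  have hk : Computable fun x : (ℕ × ℕ) × ℕ × ℕ => x.2.1 := Computable.fst.comp Computable.snd
  have hc : Computable fun x : (ℕ × ℕ) × ℕ × ℕ => x.2.2 := Computable.snd.comp Computable.snd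
  have hbk := hb.comp hk
  have hbk2 := computable₂_add.comp hbk (Computable.const 2)
  have hpow {e : (ℕ × ℕ) × ℕ × ℕ → ℕ} (he : Computable e) : Computable fun x => 2 ^ e x :=
    computable₂_pow.comp (Computable.const 2) he
  have hscale := hpow (computable₂_mul.comp hl (hpow hk))
  exact computablePred_and
    (computablePred_comp (primrecPred_to_comp
      (Primrec.nat_lt.comp (Primrec.const 0) Primrec.id)) hbk)
    (computablePred_and
      (computablePred_comp (primrecPred_to_comp Primrec.nat_le)
        ((computable₂_mul.comp (computable₂_pow.comp hc hbk) hscale).pair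
          (hpow (computable₂_mul.comp hn hbk))))
      (computablePred_comp (primrecPred_to_comp Primrec.nat_le)
        ((hpow (computable₂_mul.comp hn hbk2)).pair (computable₂_mul.comp (computable₂_pow.comp
          (computable₂_add.comp hc (Computable.const 2)) hbk2) hscale))))

/- The real power is compared with a natural number `c` by raising both sides to the power `b k`,
where `b k / 2 ^ k` approximates `T`; this only involves powers of natural numbers. -/
theorem ComputableReal.computableFamily_two_rpow {T : ℝ} (hT : ComputableReal T) (hT0 : 0 < T) :
    ComputableFamily fun l : ℕ => (2 : ℝ) ^ (-(l : ℝ) / T) := by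
  obtain ⟨b, hbc, hb⟩ := hT.computableFamily (ι := Unit) hT0.le
  replace hbc : Computable (b ()) := hbc.comp (Computable.const ()) Computable.id
  replace hb := hb ()
  generalize b () = b at hbc hb
  obtain ⟨g, hg, hgspec⟩ := exists_computable_search (r := fun (x y : ℕ × ℕ) => 0 < b y.1 ∧
      y.2 ^ b y.1 * 2 ^ (x.1 * 2 ^ y.1) ≤ 2 ^ (x.2 * b y.1) ∧
      2 ^ (x.2 * (b y.1 + 2)) ≤ (y.2 + 2) ^ (b y.1 + 2) * 2 ^ (x.1 * 2 ^ y.1))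
    (computablePred_two_rpow_bracket hbc) fun (l, n) => by
      obtain ⟨k, c, hk, hlower, hupper⟩ := exists_two_rpow_bracket hT0 hb l n
      exact ⟨(k, c), hk, (le_two_pow_mul_rpow_iff l (2 ^ k) n c hk).1 hlower,
        (two_pow_mul_rpow_le_iff l (2 ^ k) n (c + 2) (Nat.succ_pos _)).1 hupper⟩
  refine ⟨fun l n => (g (l, n)).2, Computable.snd.comp hg, fun l n => ?_⟩
  obtain ⟨hk, hlower, hupper⟩ := hgspec (l, n)
  rw [← le_two_pow_mul_rpow_iff _ _ _ _ hk] at hlower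
  rw [← two_pow_mul_rpow_le_iff _ _ _ _ (Nat.succ_pos _)] at hupper
  set k := (g (l, n)).1
  refine ⟨hlower.trans ?_, ?_⟩
  · gcongr
    exact two_rpow_neg_mul_le hT0 l (by exact_mod_cast hk) (by exact_mod_cast (hb k).1)
  · refine le_trans ?_ (hupper.trans_eq (by push_cast; rfl))
    gcongr
    exact le_two_rpow_neg_mul hT0 l (by positivity) (by exact_mod_cast (hb k).2)

end ComputableFamily

section TsumRpow

variable {ι : Type*} {x : ι → ℝ} {r : ℝ}

theorem rpow_le_rpow_tsum_mul (hx0 : ∀ i, 0 ≤ x i) (hx : Summable x) (hr : 1 ≤ r) (i : ι) :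
    x i ^ r ≤ (∑' j, x j) ^ (r - 1) * x i := by
  calc x i ^ r = x i ^ (r - 1) * x i := by
        rw [← Real.rpow_add_one' (hx0 i) (by linarith), sub_add_cancel]
    _ ≤ (∑' j, x j) ^ (r - 1) * x i := by
        have hle : x i ≤ ∑' j, x j := hx.le_tsum i fun j _ => hx0 j
        exact mul_le_mul_of_nonneg_right (Real.rpow_le_rpow (hx0 i) hle (by linarith)) (hx0 i)

theorem summable_rpow_of_one_le (hx0 : ∀ i, 0 ≤ x i) (hx : Summable x) (hr : 1 ≤ r) :
    Summable fun i => x i ^ r :=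
  .of_nonneg_of_le (fun i => Real.rpow_nonneg (hx0 i) r) (rpow_le_rpow_tsum_mul hx0 hx hr)
    (hx.mul_left _)

theorem tsum_rpow_le_rpow_tsum (hx0 : ∀ i, 0 ≤ x i) (hx : Summable x) (hr : 1 ≤ r) :
    ∑' i, x i ^ r ≤ (∑' i, x i) ^ r := by
  calc ∑' i, x i ^ r ≤ ∑' i, (∑' j, x j) ^ (r - 1) * x i :=
        (summable_rpow_of_one_le hx0 hx hr).tsum_le_tsum (rpow_le_rpow_tsum_mul hx0 hx hr)
          (hx.mul_left _)
    _ = (∑' i, x i) ^ r := by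
        rw [tsum_mul_left, ← Real.rpow_add_one' (tsum_nonneg hx0) (by linarith), sub_add_cancel]

theorem tsum_rpow_sub_sum_le (hx0 : ∀ i, 0 ≤ x i) (hx : Summable x) (hr : 1 ≤ r) (S : Finset ι) :
    ∑' i, x i ^ r - ∑ i ∈ S, x i ^ r ≤ (∑' i, x i - ∑ i ∈ S, x i) ^ r := by
  rw [← hx.sum_add_tsum_subtype_compl S,
    ← (summable_rpow_of_one_le hx0 hx hr).sum_add_tsum_subtype_compl S, add_sub_cancel_left,
    add_sub_cancel_left]
  exact tsum_rpow_le_rpow_tsum (fun i => hx0 i) (hx.subtype _) hr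

end TsumRpow

section Kraft

theorem PrefixFree.uniquelyDecodable {S : Set (List Bool)} (hS : PrefixFree S) (hnil : [] ∉ S) :
    InformationTheory.UniquelyDecodable S := by
  have ne_nil {v : List Bool} (hv : v ∈ S) : v ≠ [] := fun h => hnil (h ▸ hv)
  intro L₁
  induction L₁ with
  | nil =>
    rintro (_ | ⟨w, L₂⟩) - h₂ hflat
    · rfl
    · exact absurd (List.append_eq_nil_iff.1 hflat.symm).1 (ne_nil (h₂ w List.mem_cons_self))
  | cons v L₁ ih =>
    rintro (_ | ⟨w, L₂⟩) h₁ h₂ hflat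
    · exact absurd (List.append_eq_nil_iff.1 hflat).1 (ne_nil (h₁ v List.mem_cons_self))
    · obtain ⟨hv, hL₁⟩ := List.forall_mem_cons.1 h₁
      obtain ⟨hw, hL₂⟩ := List.forall_mem_cons.1 h₂
      rw [List.flatten_cons, List.flatten_cons] at hflat
      obtain rfl : v = w :=
        (List.prefix_or_prefix_of_prefix (List.prefix_append v _)
          (hflat ▸ List.prefix_append w _)).elim (hS v hv w hw)
          fun h => (hS w hw v hv h).symm
      rw [ih L₂ hL₁ hL₂ (List.append_cancel_left hflat)]

theorem PrefixFree.sum_half_pow_length_le_one {S : Finset (List Bool)}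
    (hS : PrefixFree (S : Set (List Bool))) : ∑ p ∈ S, (1 / 2 : ℝ) ^ p.length ≤ 1 := by
  by_cases hnil : [] ∈ S
  · have hsingle : S = {[]} :=
      Finset.eq_singleton_iff_unique_mem.2
        ⟨hnil, fun p hp => (hS [] hnil p hp List.nil_prefix).symm⟩
    simp [hsingle]
  · simpa using InformationTheory.kraft_mcmillan_inequality
      (hS.uniquelyDecodable (by simpa using hnil))

variable (U : Computer)

theorem zterm_one (p : U.domain) : zterm U 1 p = (1 / 2) ^ (p : List Bool).length := by
  rw [zterm, div_one, Real.rpow_neg zero_le_two, Real.rpow_natCast, one_div, inv_pow]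

theorem zterm_nonneg (T : ℝ) (p : U.domain) : 0 ≤ zterm U T p :=
  Real.rpow_nonneg zero_le_two _

theorem zterm_eq_zterm_one_rpow (T : ℝ) (p : U.domain) : zterm U T p = zterm U 1 p ^ (1 / T) := by
  rw [zterm, zterm, ← Real.rpow_mul zero_le_two, div_one, mul_one_div]

theorem sum_zterm_one_le_one (S : Finset U.domain) : ∑ p ∈ S, zterm U 1 p ≤ 1 := by
  have hS : PrefixFree (S.map (Function.Embedding.subtype _) : Set (List Bool)) := by
    simp only [Finset.coe_map]
    rintro _ ⟨p, -, rfl⟩ _ ⟨q, -, rfl⟩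
    exact U.prefixFree p p.2 q q.2
  simpa [zterm_one] using hS.sum_half_pow_length_le_one

theorem summable_zterm_one : Summable (zterm U 1) :=
  summable_of_sum_le (zterm_nonneg U 1) (sum_zterm_one_le_one U)

theorem tsum_zterm_one_le_one : ∑' p, zterm U 1 p ≤ 1 :=
  (summable_zterm_one U).tsum_le_of_sum_le (sum_zterm_one_le_one U)

theorem summable_zterm {T : ℝ} (hT0 : 0 < T) (hT1 : T ≤ 1) : Summable (zterm U T) := by
  simpa only [← zterm_eq_zterm_one_rpow] using
    summable_rpow_of_one_le (zterm_nonneg U 1) (summable_zterm_one U) (one_le_one_div hT0 hT1)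

theorem tsum_zterm_sub_sum_le {T : ℝ} (hT0 : 0 < T) (hT1 : T ≤ 1) (S : Finset U.domain) :
    ∑' p, zterm U T p - ∑ p ∈ S, zterm U T p ≤
      (∑' p, zterm U 1 p - ∑ p ∈ S, zterm U 1 p) ^ (1 / T) := by
  simpa only [← zterm_eq_zterm_one_rpow] using
    tsum_rpow_sub_sum_le (zterm_nonneg U 1) (summable_zterm_one U) (one_le_one_div hT0 hT1) S

end Kraft

section Enumeration

variable {α β : Type*} [Primcodable α] [Primcodable β]

theorem exists_primrec_evaln {f : α →. β} (hf : Partrec f) : ∃ e : ℕ → α → Option β, Primrec₂ e ∧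
    (∀ s a, ∀ b ∈ e s a, b ∈ f a) ∧ ∀ a, ∀ b ∈ f a, ∀ᶠ s in atTop, b ∈ e s a := by
  obtain ⟨c, hc⟩ := Nat.Partrec.Code.exists_code.1 hf
  have heval (a : α) (v : ℕ) : v ∈ c.eval (Encodable.encode a) ↔
      ∃ b ∈ f a, Encodable.encode b = v := by simp [hc]
  refine ⟨fun s a => (c.evaln s (Encodable.encode a)).bind Encodable.decode, ?_,
    fun s a b hb => ?_, fun a b hb => ?_⟩
  · exact Primrec.option_bind (Nat.Partrec.Code.primrec_evaln.comp
      ((Primrec.fst.pair (Primrec.const c)).pair (Primrec.encode.comp Primrec.snd)))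
      (Primrec.decode.comp Primrec.snd)
  · obtain ⟨v, hv, hvb⟩ := Option.mem_bind_iff.1 hb
    obtain ⟨b', hb', rfl⟩ := (heval a v).1 (Nat.Partrec.Code.evaln_sound hv)
    rw [Encodable.encodek] at hvb
    rwa [← Option.some.inj hvb]
  · obtain ⟨k, hk⟩ := Nat.Partrec.Code.evaln_complete.1 ((heval a _).2 ⟨b, hb, rfl⟩)
    filter_upwards [eventually_ge_atTop k] with s hs
    exact Option.mem_bind_iff.2
      ⟨_, Nat.Partrec.Code.evaln_mono hs hk, Encodable.encodek b⟩

/-- A computable exhaustion of the graph of a partial function by finite lists without repeated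
arguments; `graph s` is what a dovetailed computation has found by stage `s`. -/
structure StageEnumeration (f : α →. β) where
  graph : ℕ → List (α × β)
  computable_graph : Computable graph
  nodup (s : ℕ) : ((graph s).map Prod.fst).Nodup
  sound {s : ℕ} {a : α} {b : β} : (a, b) ∈ graph s → b ∈ f a
  eventually_mem {a : α} {b : β} : b ∈ f a → ∀ᶠ s in atTop, (a, b) ∈ graph s

theorem nonempty_stageEnumeration {f : α →. β} (hf : Partrec f) :
    Nonempty (StageEnumeration f) := by
  obtain ⟨e, he, hsound, hcomplete⟩ := exists_primrec_evaln hf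
  let find (s i : ℕ) : Option (α × β) :=
    (Encodable.decode₂ α i).bind fun a => (e s a).map fun b => (a, b)
  have mem_find {s i a b} : (a, b) ∈ find s i ↔ Encodable.encode a = i ∧ b ∈ e s a := by
    simp [find, Option.bind_eq_some_iff, Encodable.decode₂_eq_some]
  have hfind : Primrec₂ find :=
    Primrec.option_bind (Primrec.decode₂.comp Primrec.snd)
      (Primrec.option_map (he.comp (Primrec.fst.comp Primrec.fst) Primrec.snd)
        ((Primrec.snd.comp Primrec.fst).pair Primrec.snd))
  refine ⟨⟨fun s => (List.range s).filterMap (find s),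
    (Primrec.listFilterMap Primrec.list_range hfind).to_comp, fun s => ?_, fun h => ?_,
    fun {a b} hb => ?_⟩⟩
  · rw [List.map_filterMap]
    refine List.nodup_range.filterMap fun i j a hi hj => ?_
    obtain ⟨⟨_, b⟩, hai, rfl⟩ := Option.mem_map.1 hi
    obtain ⟨⟨_, c⟩, haj, rfl⟩ := Option.mem_map.1 hj
    exact (mem_find.1 hai).1.symm.trans (mem_find.1 haj).1
  · obtain ⟨i, -, hi⟩ := List.mem_filterMap.1 h
    exact hsound _ _ _ (mem_find.1 hi).2
  · filter_upwards [hcomplete a b hb, eventually_gt_atTop (Encodable.encode a)] with s hs hlt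
    exact List.mem_filterMap.2 ⟨_, List.mem_range.2 hlt, mem_find.2 ⟨rfl, hs⟩⟩

end Enumeration

namespace StageEnumeration

variable {U : Computer} (E : StageEnumeration U.f)

open Classical in
/-- The programs of a computer that have been found to halt by stage `s`. -/
noncomputable def stage (s : ℕ) : Finset U.domain :=
  ((E.graph s).map Prod.fst).toFinset.subtype (· ∈ U.domain)

variable {E} in
theorem exists_mem_graph_of_mem_stage {s : ℕ} {p : U.domain} (hp : p ∈ E.stage s) :
    ∃ y, ((p : List Bool), y) ∈ E.graph s := by
  simpa [stage] using hp

theorem tendsto_stage : Tendsto E.stage atTop atTop := by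
  refine tendsto_atTop.2 fun S => ?_
  have hall : ∀ p ∈ S, ∀ᶠ s in atTop, p ∈ E.stage s := fun p _ => by
    filter_upwards [E.eventually_mem (Part.get_mem p.2)] with s hs
    simp only [stage, Finset.mem_subtype, List.mem_toFinset]
    exact List.mem_map_of_mem hs
  filter_upwards [(eventually_all_finset S).2 hall] with s hs p hp using hs p hp

/-- The part of the partition function `Z(T)` contributed by the programs found by stage `s`. -/
noncomputable def partialZ (T : ℝ) (s : ℕ) : ℝ := ∑ p ∈ E.stage s, zterm U T p

theorem computableFamily_partialZ {T : ℝ} (hT0 : 0 < T) (hTc : ComputableReal T) :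
    ComputableFamily (E.partialZ T) := by
  have hsum (s : ℕ) : E.partialZ T s =
      (((E.graph s).map Prod.fst).map fun p => (2 : ℝ) ^ (-(p.length : ℝ) / T)).sum := by
    classical
    rw [← List.sum_toFinset _ (E.nodup s)]
    refine Finset.sum_subtype_of_mem (fun p : List Bool => (2 : ℝ) ^ (-(p.length : ℝ) / T))
      fun p hp => ?_
    obtain ⟨⟨p, y⟩, hpy, rfl⟩ := List.mem_map.1 (List.mem_toFinset.1 hp)
    exact Part.dom_iff_mem.2 ⟨y, E.sound hpy⟩
  rw [funext hsum]
  exact ((hTc.computableFamily_two_rpow hT0).comp Computable.list_length).list_sum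
    ((Primrec.list_map Primrec.id (Primrec.fst.comp Primrec.snd).to₂).to_comp.comp
      E.computable_graph)

variable {T : ℝ}

theorem partialZ_le_tsum (hT0 : 0 < T) (hT1 : T ≤ 1) (s : ℕ) :
    E.partialZ T s ≤ ∑' p, zterm U T p :=
  (summable_zterm U hT0 hT1).sum_le_tsum _ fun p _ => zterm_nonneg U T p

theorem tendsto_partialZ (hT0 : 0 < T) (hT1 : T ≤ 1) :
    Tendsto (E.partialZ T) atTop (nhds (∑' p, zterm U T p)) :=
  (summable_zterm U hT0 hT1).hasSum.comp E.tendsto_stage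

end StageEnumeration

theorem leftComputable_tsum_zterm (U : Computer) {T : ℝ} (hT0 : 0 < T) (hT1 : T ≤ 1)
    (hTc : ComputableReal T) : LeftComputable (∑' p, zterm U T p) :=
  let ⟨E⟩ := nonempty_stageEnumeration U.partrec
  (E.computableFamily_partialZ hT0 hTc).leftComputable_of_tendsto (E.partialZ_le_tsum hT0 hT1)
    (E.tendsto_partialZ hT0 hT1)

section Bits

/-- The last `n` binary digits of `v`, most significant first. -/
def toBits (n v : ℕ) : List Bool :=
  (List.range n).map fun i => decide (v / 2 ^ (n - (i + 1)) % 2 = 1)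

/-- The number with the given binary digits, most significant first. -/
def ofBits (l : List Bool) : ℕ :=
  l.foldl (fun v b => 2 * v + b.toNat) 0

theorem computable₂_toBits : Computable₂ toBits := by
  have hpow : Primrec₂ ((· ^ ·) : ℕ → ℕ → ℕ) := Primrec₂.unpaired'.1 Nat.Primrec.pow
  have hdigit : PrimrecPred fun x : (ℕ × ℕ) × ℕ => x.1.2 / 2 ^ (x.1.1 - (x.2 + 1)) % 2 = 1 :=
    Primrec.eq.comp (Primrec.nat_mod.comp (Primrec.nat_div.comp (Primrec.snd.comp Primrec.fst)
      (hpow.comp (Primrec.const 2) (Primrec.nat_sub.comp (Primrec.fst.comp Primrec.fst)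
        (Primrec.succ.comp Primrec.snd)))) (Primrec.const 2)) (Primrec.const 1)
  exact (Primrec.list_map (Primrec.list_range.comp Primrec.fst) hdigit.decide.to₂).to_comp

theorem computable_ofBits : Computable ofBits :=
  (Primrec.list_foldl Primrec.id (Primrec.const 0) (Primrec.nat_add.comp
    (Primrec.nat_mul.comp (Primrec.const 2) (Primrec.fst.comp Primrec.snd))
    ((Primrec.dom_finite Bool.toNat).comp (Primrec.snd.comp Primrec.snd))).to₂).to_comp

theorem length_toBits (n v : ℕ) : (toBits n v).length = n := by
  rw [toBits, List.length_map, List.length_range]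

theorem toBits_succ (n v : ℕ) : toBits (n + 1) v = toBits n (v / 2) ++ [decide (v % 2 = 1)] := by
  rw [toBits, List.range_succ, List.map_append, toBits]
  congr 1
  · refine List.map_congr_left fun i hi => ?_
    rw [Nat.div_div_eq_div_mul, ← pow_succ',
      show n + 1 - (i + 1) = n - (i + 1) + 1 by have := List.mem_range.1 hi; omega]
  · simp

theorem ofBits_toBits (n v : ℕ) : ofBits (toBits n v) = v % 2 ^ n := by
  induction n generalizing v with
  | zero => simp [toBits, ofBits, Nat.mod_one]
  | succ n ih =>
    have hlast : (decide (v % 2 = 1)).toNat = v % 2 := by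
      rcases Nat.mod_two_eq_zero_or_one v with h | h <;> simp [h]
    rw [toBits_succ, ofBits, List.foldl_append, ← ofBits, ih, List.foldl_cons, List.foldl_nil,
      hlast, pow_succ', Nat.mod_mul, add_comm]

theorem toBits_inj {n v w : ℕ} (hv : v < 2 ^ n) (hw : w < 2 ^ n) (h : toBits n v = toBits n w) :
    v = w := by
  rw [← Nat.mod_eq_of_lt hv, ← Nat.mod_eq_of_lt hw, ← ofBits_toBits, ← ofBits_toBits, h]

theorem length_bits (x : ℝ) (n : ℕ) : (bits x n).length = n := by
  rw [bits, List.length_map, List.length_range]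

variable {x : ℝ}

theorem natFloor_mul_two_pow_div (m k : ℕ) : ⌊x * 2 ^ (m + k)⌋₊ / 2 ^ k = ⌊x * 2 ^ m⌋₊ := by
  have h := Nat.floor_div_natCast (x * 2 ^ (m + k)) (2 ^ k)
  rw [Nat.cast_pow, Nat.cast_two, pow_add, ← mul_assoc,
    mul_div_cancel_right₀ _ (pow_ne_zero k two_ne_zero)] at h
  rw [h, pow_add, mul_assoc]

theorem binDigit_succ (m : ℕ) (hx : 0 ≤ x) :
    binDigit x (m + 1) = decide (⌊x * 2 ^ (m + 1)⌋₊ % 2 = 1) := by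
  have hfract : Int.fract x * 2 ^ (m + 1) = x * 2 ^ (m + 1) - (2 ^ m * ⌊x⌋ * 2 : ℤ) := by
    rw [Int.fract]; push_cast; ring
  have hfloor : (⌊x * 2 ^ (m + 1)⌋₊ : ℤ) = ⌊x * 2 ^ (m + 1)⌋ :=
    Int.natCast_floor_eq_floor (by positivity)
  rw [binDigit, hfract, Int.floor_sub_intCast, Int.sub_mul_emod_self_right, ← hfloor]
  exact decide_eq_decide.2 (by omega)

theorem bits_eq_toBits (n : ℕ) (hx : 0 ≤ x) : bits x n = toBits n ⌊x * 2 ^ n⌋₊ := by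
  refine List.map_congr_left fun i hi => ?_
  have hsplit : n = i + 1 + (n - (i + 1)) := by have := List.mem_range.1 hi; omega
  have hdiv := natFloor_mul_two_pow_div (x := x) (i + 1) (n - (i + 1))
  rw [← hsplit] at hdiv
  rw [binDigit_succ i hx, hdiv]

theorem natFloor_mul_two_pow_eq (n : ℕ) (hx : 0 ≤ x) :
    ⌊x * 2 ^ n⌋₊ = 2 ^ n * ⌊x⌋₊ + ofBits (bits x n) := by
  have hdiv := natFloor_mul_two_pow_div (x := x) 0 n
  rw [zero_add, pow_zero, mul_one] at hdiv
  rw [bits_eq_toBits n hx, ofBits_toBits, ← hdiv, Nat.div_add_mod]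

end Bits

section Complexity

variable {U : Computer}

theorem H_le_length {x p : List Bool} (h : x ∈ U.f p) : H U x ≤ p.length :=
  Nat.sInf_le ⟨p, rfl, h⟩

theorem exists_length_eq_H {x q : List Bool} (h : x ∈ U.f q) : ∃ p, p.length = H U x ∧ x ∈ U.f p :=
  Nat.sInf_mem (s := {n | ∃ p : List Bool, p.length = n ∧ x ∈ U.f p}) ⟨q.length, q, rfl, h⟩

theorem exists_computer_of_prefixFree_code {γ : Type*} [Primcodable γ] {c : γ → List Bool}
    (hc : Computable c) {S : γ → Prop} (hS : ComputablePred S)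
    (hpf : ∀ a b, S a → S b → c a <+: c b → a = b) {φ : γ →. List Bool} (hφ : Partrec φ) :
    ∃ C : Computer, ∀ a, S a → C.f (c a) = φ a := by
  obtain ⟨g, hg, hsound, hdom⟩ := exists_partrec_search (r := fun p a => S a ∧ c a = p)
    (computablePred_and (computablePred_comp hS Computable.snd)
      (computablePred_comp (primrecPred_to_comp Primrec.eq)
        ((hc.comp Computable.snd).pair Computable.fst)))
  have hdecode (p : List Bool) (h : ((g p).bind φ).Dom) : ∃ a, S a ∧ c a = p :=
    ⟨_, hsound p _ (Part.get_mem h.of_bind)⟩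
  refine ⟨⟨fun p => (g p).bind φ, hg.bind (hφ.comp Computable.snd), fun p hp q hq hpq => ?_⟩,
    fun a ha => ?_⟩
  · obtain ⟨a, ha, rfl⟩ := hdecode p hp
    obtain ⟨b, hb, rfl⟩ := hdecode q hq
    rw [hpf a b ha hb hpq]
  · obtain ⟨b, hb⟩ := Part.dom_iff_mem.1 (hdom (c a) a ⟨ha, rfl⟩)
    obtain ⟨hSb, hba⟩ := hsound _ b hb
    obtain rfl := hpf b a hSb ha (hba ▸ List.prefix_rfl)
    change (g (c b)).bind φ = φ b
    exact (congrArg (Part.bind · φ) (Part.eq_some_iff.2 hb)).trans (Part.bind_some b φ)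

theorem IsOptimal.exists_mem (hU : IsOptimal U) (x : List Bool) : ∃ p, x ∈ U.f p := by
  obtain ⟨C, hC⟩ := exists_computer_of_prefixFree_code (γ := Unit) (S := fun _ => True)
    (φ := fun _ => Part.some x) (Computable.const []) ⟨inferInstance, Computable.const true⟩
    (fun _ _ _ _ _ => rfl) (Computable.const x)
  obtain ⟨d, hd⟩ := hU C
  have hx : x ∈ C.f [] := hC () trivial ▸ Part.mem_some x
  obtain ⟨p, -, hp⟩ := hd [] (Part.dom_iff_mem.2 ⟨x, hx⟩)
  exact ⟨p, hp x hx⟩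

theorem IsOptimal.exists_H_le_length_add (hU : IsOptimal U) (C : Computer) :
    ∃ d, ∀ p x, x ∈ C.f p → H U x ≤ p.length + d := by
  obtain ⟨d, hd⟩ := hU C
  refine ⟨d, fun p x hx => ?_⟩
  obtain ⟨p', hlen, hp'⟩ := hd p (Part.dom_iff_mem.2 ⟨x, hx⟩)
  exact (H_le_length (hp' x hx)).trans hlen

theorem IsOptimal.exists_H_le_H_add (hU : IsOptimal U) {g : List Bool →. List Bool}
    (hg : Partrec g) : ∃ d, ∀ x y, y ∈ g x → H U y ≤ H U x + d := by
  obtain ⟨d, hd⟩ := hU.exists_H_le_length_add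
    { f := fun p => (U.f p).bind g
      partrec := U.partrec.bind (hg.comp Computable.snd)
      prefixFree := fun p hp q hq => U.prefixFree p hp.of_bind q hq.of_bind }
  refine ⟨d, fun x y hy => ?_⟩
  obtain ⟨p, hlen, hp⟩ := exists_length_eq_H (hU.exists_mem x).choose_spec
  exact hlen ▸ hd p y (Part.mem_bind hp hy)

end Complexity

section Random

variable {U : Computer} (E : StageEnumeration U.f) {T : ℝ}

namespace StageEnumeration

theorem zterm_le_tsum_sub_partialZ (hT0 : 0 < T) (hT1 : T ≤ 1) {s : ℕ} {p : U.domain}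
    (hp : p ∉ E.stage s) : zterm U T p ≤ ∑' q, zterm U T q - E.partialZ T s := by
  classical
  have hle := (summable_zterm U hT0 hT1).sum_le_tsum (insert p (E.stage s))
    fun q _ => zterm_nonneg U T q
  rw [Finset.sum_insert hp] at hle
  exact le_sub_iff_add_le.2 hle

theorem two_rpow_le_tsum_sub_partialZ (hT0 : 0 < T) (hT1 : T ≤ 1) {s : ℕ} {p y : List Bool}
    (hp : y ∈ U.f p) (hy : y ∉ (E.graph s).map Prod.snd) :
    (2 : ℝ) ^ (-(p.length : ℝ) / T) ≤ ∑' q, zterm U T q - E.partialZ T s := by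
  refine E.zterm_le_tsum_sub_partialZ hT0 hT1 (p := ⟨p, Part.dom_iff_mem.2 ⟨y, hp⟩⟩) fun hmem => ?_
  obtain ⟨z, hz⟩ := exists_mem_graph_of_mem_stage hmem
  obtain rfl := Part.mem_unique (E.sound hz) hp
  exact hy (List.mem_map_of_mem hz)

end StageEnumeration

theorem le_length_of_two_rpow_le (hT0 : 0 < T) {n l : ℕ}
    (h : (2 : ℝ) ^ (-(l : ℝ) / T) ≤ 2 ^ (2 - n : ℝ)) : T * n - 2 * T ≤ l := by
  have hexp := (Real.rpow_le_rpow_left_iff one_lt_two).1 h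
  rw [div_le_iff₀ hT0] at hexp
  linarith

theorem sub_le_two_rpow_of_floor_le {z x : ℝ} {n : ℕ} (h : (⌊z * 2 ^ n⌋₊ : ℝ) ≤ 2 ^ n * x + 2) :
    z - x ≤ 2 ^ (2 - n : ℝ) := by
  rw [Real.rpow_sub two_pos, Real.rpow_natCast, le_div_iff₀ (by positivity)]
  have hfloor := Nat.lt_floor_add_one (z * 2 ^ n)
  norm_num
  linarith

theorem exists_partrec_output_notMem_graph {α β : Type*} [Primcodable α] [Primcodable β]
    [Infinite β] {f : α →. β} (E : StageEnumeration f) {z : ℝ} (hz : 0 ≤ z) {x : ℕ → ℝ}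
    (hx : ComputableFamily x) (hlim : Tendsto x atTop (nhds z)) :
    ∃ g : List Bool →. β, Partrec g ∧ ∀ n, ∃ y ∈ g (bits z n), ∃ s,
      z - x s ≤ 2 ^ (2 - n : ℝ) ∧ y ∉ (E.graph s).map Prod.snd := by
  obtain ⟨g, hg, hsound, hdom⟩ := hx.exists_partrec_stage
  obtain ⟨w, hw, hwmem⟩ := exists_computable_notMem (β := β)
  have hfloor : Computable fun l : List Bool => 2 ^ l.length * ⌊z⌋₊ + ofBits l :=
    computable₂_add.comp (computable₂_mul.comp (computable₂_pow.comp (Computable.const 2)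
      Computable.list_length) (Computable.const ⌊z⌋₊)) computable_ofBits
  have houtputs : Computable fun s => (E.graph s).map Prod.snd :=
    (Primrec.list_map Primrec.id (Primrec.snd.comp Primrec.snd).to₂).to_comp.comp E.computable_graph
  refine ⟨fun l => (g (l.length, 2 ^ l.length * ⌊z⌋₊ + ofBits l)).map
    fun s => w ((E.graph s).map Prod.snd),
    (hg.comp (Computable.list_length.pair hfloor)).map ((hw.comp houtputs).comp Computable.snd),
    fun n => ?_⟩
  have hle : (⌊z * 2 ^ n⌋₊ : ℝ) ≤ 2 ^ n * z :=
    (Nat.floor_le (by positivity)).trans_eq (mul_comm _ _)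
  obtain ⟨s, hs⟩ := Part.dom_iff_mem.1 (hdom z hlim n _ hle)
  refine ⟨w ((E.graph s).map Prod.snd), (Part.mem_map_iff _).2 ⟨s, ?_, rfl⟩, s,
    sub_le_two_rpow_of_floor_le (hsound n _ s hs), hwmem _⟩
  rwa [length_bits, ← natFloor_mul_two_pow_eq n hz]

theorem weaklyChaitinRandom_tsum_zterm (hU : IsOptimal U) (hT0 : 0 < T) (hT1 : T ≤ 1)
    (hTc : ComputableReal T) : WeaklyChaitinRandom U T (∑' p, zterm U T p) := by
  obtain ⟨E⟩ := nonempty_stageEnumeration U.partrec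
  obtain ⟨g, hg, hgout⟩ := exists_partrec_output_notMem_graph E (tsum_nonneg (zterm_nonneg U T))
    (E.computableFamily_partialZ hT0 hTc) (E.tendsto_partialZ hT0 hT1)
  obtain ⟨d, hd⟩ := hU.exists_H_le_H_add hg
  refine ⟨2 * T + d, fun n _ => ?_⟩
  obtain ⟨y, hy, s, hs, hys⟩ := hgout n
  obtain ⟨p, hplen, hp⟩ := exists_length_eq_H (hU.exists_mem y).choose_spec
  have hlength := le_length_of_two_rpow_le hT0
    ((E.two_rpow_le_tsum_sub_partialZ hT0 hT1 hp hys).trans hs)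
  have hH : (p.length : ℝ) ≤ H U (bits (∑' p, zterm U T p) n) + d := by
    exact_mod_cast hplen ▸ hd _ y hy
  linarith

end Random

section Header

theorem replicate_true_append_inj {a b : ℕ} {u v : List Bool}
    (h : List.replicate a true ++ false :: u = List.replicate b true ++ false :: v) :
    a = b ∧ u = v := by
  induction a generalizing b with
  | zero => cases b <;> simp_all [List.replicate_succ]
  | succ a ih =>
    cases b with
    | zero => simp [List.replicate_succ] at h
    | succ b =>
      obtain ⟨rfl, huv⟩ := ih (List.cons.inj h).2
      exact ⟨rfl, huv⟩

/-- A self-delimiting code for `n` of length `O(√n)`: the numbers `√n` and `n - √n ^ 2` in unary,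
each closed by `false`. -/
def sqrtHeader (n : ℕ) : List Bool :=
  List.replicate n.sqrt true ++ false :: (List.replicate (n - n.sqrt * n.sqrt) true ++ [false])

theorem computable_sqrtHeader : Computable sqrtHeader := by
  have hones : Primrec fun n : ℕ => List.replicate n true :=
    (Primrec.list_map Primrec.list_range (Primrec.const true).to₂).of_eq fun n => by
      rw [List.map_const', List.length_range]
  exact (Primrec.list_append.comp (hones.comp Primrec.nat_sqrt) (Primrec.list_cons.comp
    (Primrec.const false) (Primrec.list_append.comp (hones.comp (Primrec.nat_sub.comp Primrec.id
      (Primrec.nat_mul.comp Primrec.nat_sqrt Primrec.nat_sqrt))) (Primrec.const [false])))).to_comp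

theorem length_sqrtHeader_le (n : ℕ) : (sqrtHeader n).length ≤ 3 * n.sqrt + 2 := by
  have hsqrt := Nat.sqrt_le_add n
  simp only [sqrtHeader, List.length_append, List.length_cons, List.length_replicate,
    List.length_nil]
  omega

theorem sqrtHeader_append_inj {m n : ℕ} {u v : List Bool}
    (h : sqrtHeader m ++ u = sqrtHeader n ++ v) : m = n ∧ u = v := by
  simp only [sqrtHeader, List.append_assoc, List.cons_append, List.nil_append] at h
  obtain ⟨hsqrt, htail⟩ := replicate_true_append_inj h
  obtain ⟨hrem, huv⟩ := replicate_true_append_inj htail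
  have hm := Nat.sqrt_le m
  have hn := Nat.sqrt_le n
  rw [hsqrt] at hrem hm
  exact ⟨by omega, huv⟩

theorem sqrtHeader_append_toBits_inj {len : ℕ → ℕ} {m n v w : ℕ} (hv : v < 2 ^ len m)
    (hw : w < 2 ^ len n)
    (h : sqrtHeader m ++ toBits (len m) v <+: sqrtHeader n ++ toBits (len n) w) :
    m = n ∧ v = w := by
  obtain ⟨t, ht⟩ := h
  rw [List.append_assoc] at ht
  obtain ⟨rfl, ht⟩ := sqrtHeader_append_inj ht
  exact ⟨rfl, toBits_inj hv hw (List.IsPrefix.eq_of_length ⟨t, ht⟩ (by simp only [length_toBits]))⟩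

theorem IsOptimal.exists_H_le_add_sqrt {U : Computer} (hU : IsOptimal U) {len : ℕ → ℕ}
    (hlen : Computable len) {φ : ℕ × ℕ →. List Bool} (hφ : Partrec φ) :
    ∃ d, ∀ n v, v < 2 ^ len n → ∀ y ∈ φ (n, v), H U y ≤ len n + 3 * n.sqrt + d := by
  have hlen' : Computable fun x : ℕ × ℕ => len x.1 := hlen.comp Computable.fst
  obtain ⟨C, hC⟩ := exists_computer_of_prefixFree_code
    (c := fun x : ℕ × ℕ => sqrtHeader x.1 ++ toBits (len x.1) x.2)
    (S := fun x => x.2 < 2 ^ len x.1)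
    (Computable.list_append.comp (computable_sqrtHeader.comp Computable.fst)
      (computable₂_toBits.comp hlen' Computable.snd))
    (computablePred_comp (primrecPred_to_comp Primrec.nat_lt)
      (Computable.snd.pair (computable₂_pow.comp (Computable.const 2) hlen')))
    (fun _ _ hv hw h => Prod.ext_iff.2 (sqrtHeader_append_toBits_inj hv hw h)) hφ
  obtain ⟨d, hd⟩ := hU.exists_H_le_length_add C
  refine ⟨d + 2, fun n v hv y hy => ?_⟩
  have hH := hd _ y ((hC (n, v) hv).symm ▸ hy)
  have hheader := length_sqrtHeader_le n
  simp only [List.length_append, length_toBits] at hH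
  omega

end Header

section Compressible

theorem dCompressible_of_H_le {U : Computer} {D x : ℝ} {e : ℕ → ℝ}
    (he : Tendsto (fun n => e n / n) atTop (nhds 0)) (h : ∀ n, H U (bits x n) ≤ D * n + e n) :
    DCompressible U D x := by
  have hlim : Tendsto (fun n => D + e n / n) atTop (nhds D) := by
    simpa using he.const_add D
  rw [DCompressible, ← hlim.limsup_eq]
  refine limsup_le_limsup ?_ (isCoboundedUnder_le_of_le atTop (x := 0) fun n => by positivity)
    hlim.isBoundedUnder_le
  filter_upwards [eventually_gt_atTop 0] with n hn
  have hn' : (0 : ℝ) < n := Nat.cast_pos.2 hn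
  rw [div_le_iff₀ hn', add_mul, div_mul_cancel₀ _ hn'.ne']
  exact h n

theorem tendsto_natSqrt_div_atTop :
    Tendsto (fun n : ℕ => (n.sqrt : ℝ) / n) atTop (nhds 0) := by
  refine squeeze_zero (fun n => by positivity) (fun n => ?_)
    ((Real.tendsto_sqrt_atTop.comp tendsto_natCast_atTop_atTop).inv_tendsto_atTop)
  calc (n.sqrt : ℝ) / n ≤ √n / n := by gcongr; exact Real.nat_sqrt_le_real_sqrt
    _ = (√n)⁻¹ := by rw [Real.sqrt_div_self', one_div]

theorem computableReal_one : ComputableReal 1 :=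
  ⟨fun _ => 1, Computable.const 1, fun n hn => by simpa using Nat.lt_of_succ_le hn⟩

theorem ComputableReal.exists_computable_natCast_mul {T : ℝ} (hT : ComputableReal T)
    (hT0 : 0 ≤ T) : ∃ m : ℕ → ℕ, Computable m ∧ ∀ n, m n ≤ T * n ∧ T * n ≤ m n + 3 := by
  obtain ⟨b, hbc, hb⟩ := hT.computableFamily (ι := Unit) hT0
  refine ⟨fun n => n * b () n / 2 ^ n, computable₂_div.comp (computable₂_mul.comp Computable.id
    (hbc.comp (Computable.const ()) Computable.id))
    (computable₂_pow.comp (Computable.const 2) Computable.id), fun n => ?_⟩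
  obtain ⟨hlower, hupper⟩ := hb () n
  have hn : (n : ℝ) ≤ 2 ^ n := by exact_mod_cast n.lt_two_pow_self.le
  have hpow : (0 : ℝ) < 2 ^ n := by positivity
  have hfloor : ((n * b () n / 2 ^ n : ℕ) : ℝ) ≤ n * b () n / 2 ^ n := by
    exact_mod_cast Nat.cast_div_le (α := ℝ) (m := n * b () n) (n := 2 ^ n)
  have hfloor' : (n * b () n : ℝ) / 2 ^ n < (n * b () n / 2 ^ n : ℕ) + 1 := by
    rw [div_lt_iff₀ hpow]
    exact_mod_cast Nat.lt_mul_of_div_lt (Nat.lt_succ_self _) (by positivity)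
  rw [le_div_iff₀ hpow] at hfloor
  rw [div_lt_iff₀ hpow] at hfloor'
  constructor <;> refine le_of_mul_le_mul_right ?_ hpow <;> nlinarith [n.cast_nonneg (α := ℝ)]

theorem exists_floor_eq_add {y z : ℝ} {b n : ℕ} (hb : b ≤ 2 ^ n * y ∧ 2 ^ n * y ≤ b + 2)
    (hyz : y ≤ z) (hzy : z - y ≤ 2 ^ (-n : ℝ)) : ∃ e < 4, ⌊z * 2 ^ n⌋₊ = b + e := by
  have hpow : (0 : ℝ) < 2 ^ n := by positivity
  rw [Real.rpow_neg zero_le_two, Real.rpow_natCast, ← one_div, le_div_iff₀ hpow] at hzy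
  have hle : b ≤ ⌊z * 2 ^ n⌋₊ := Nat.le_floor (by nlinarith)
  have hlt : ⌊z * 2 ^ n⌋₊ < b + 4 := (Nat.floor_lt' (by omega)).2 (by push_cast; linarith)
  exact ⟨⌊z * 2 ^ n⌋₊ - b, by omega, by omega⟩

theorem four_mul_natFloor_add_lt {w : ℝ} (hw : w ≤ 1) {k e : ℕ} (he : e < 4) :
    4 * ⌊w * 2 ^ k⌋₊ + e < 2 ^ (k + 3) := by
  have hfloor : ⌊w * 2 ^ k⌋₊ ≤ 2 ^ k := Nat.floor_le_of_le (by
    simpa only [Nat.cast_pow, Nat.cast_two] using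
      mul_le_of_le_one_left (pow_nonneg zero_le_two k) hw)
  have hpos := Nat.one_le_two_pow (n := k)
  rw [pow_add]
  omega

theorem exists_partrec_bits {x y : ℕ → ℝ} (hx : ComputableFamily x) (hy : ComputableFamily y)
    {w z : ℝ} (hw0 : 0 ≤ w) (hz0 : 0 ≤ z) (hxw : Tendsto x atTop (nhds w)) (hyz : ∀ s, y s ≤ z)
    {k : ℕ → ℕ} (hk : Computable k)
    (hxy : ∀ n s, w - x s ≤ 2 ^ (2 - k n : ℝ) → z - y s ≤ 2 ^ (-n : ℝ)) :
    ∃ φ : ℕ × ℕ →. List Bool, Partrec φ ∧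
      ∀ n, ∃ e < 4, bits z n ∈ φ (n, 4 * ⌊w * 2 ^ k n⌋₊ + e) := by
  obtain ⟨g, hg, hsound, hdom⟩ := hx.exists_partrec_stage
  obtain ⟨b, hbc, hb⟩ := hy
  have hindex : Computable fun x : ℕ × ℕ => (k x.1, x.2 / 4) :=
    (hk.comp Computable.fst).pair (computable₂_div.comp Computable.snd (Computable.const 4))
  have houtput : Computable₂ fun (x : ℕ × ℕ) s => toBits x.1 (b s x.1 + x.2 % 4) :=
    computable₂_toBits.comp (Computable.fst.comp Computable.fst) (computable₂_add.comp
      (hbc.comp Computable.snd (Computable.fst.comp Computable.fst))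
      (Primrec.nat_mod.to_comp.comp (Computable.snd.comp Computable.fst) (Computable.const 4)))
  refine ⟨fun x => (g (k x.1, x.2 / 4)).map fun s => toBits x.1 (b s x.1 + x.2 % 4),
    (hg.comp hindex).map houtput, fun n => ?_⟩
  have hle : (⌊w * 2 ^ k n⌋₊ : ℝ) ≤ 2 ^ k n * w :=
    (Nat.floor_le (by positivity)).trans_eq (mul_comm _ _)
  obtain ⟨s, hs⟩ := Part.dom_iff_mem.1 (hdom w hxw (k n) _ hle)
  obtain ⟨e, he, hfloor⟩ := exists_floor_eq_add (hb s n) (hyz s)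
    (hxy n s (sub_le_two_rpow_of_floor_le (hsound _ _ s hs)))
  refine ⟨e, he, (Part.mem_map_iff _).2 ⟨s, ?_, ?_⟩⟩
  · rwa [show (4 * ⌊w * 2 ^ k n⌋₊ + e) / 4 = ⌊w * 2 ^ k n⌋₊ by omega]
  · rw [bits_eq_toBits n hz0, hfloor, show (4 * ⌊w * 2 ^ k n⌋₊ + e) % 4 = e by omega]

theorem rpow_one_div_le_two_rpow_neg {T t : ℝ} (hT0 : 0 < T) (ht : 0 ≤ t) {m n : ℕ}
    (hmn : T * n ≤ m + 3) (h : t ≤ 2 ^ (2 - (m + 5 : ℕ) : ℝ)) : t ^ (1 / T) ≤ 2 ^ (-n : ℝ) := by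
  refine (Real.rpow_le_rpow ht h (by positivity)).trans ?_
  rw [← Real.rpow_mul zero_le_two, mul_one_div]
  refine Real.rpow_le_rpow_of_exponent_le one_le_two ((div_le_iff₀ hT0).2 ?_)
  push_cast
  linarith

theorem dCompressible_tsum_zterm {U : Computer} (hU : IsOptimal U) {T : ℝ} (hT0 : 0 < T)
    (hT1 : T ≤ 1) (hTc : ComputableReal T) : DCompressible U T (∑' p, zterm U T p) := by
  obtain ⟨E⟩ := nonempty_stageEnumeration U.partrec
  obtain ⟨m, hmc, hm⟩ := hTc.exists_computable_natCast_mul hT0.le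
  have hk : Computable fun n => m n + 5 := computable₂_add.comp hmc (Computable.const 5)
  have htail (n s : ℕ) (h : ∑' p, zterm U 1 p - E.partialZ 1 s ≤ 2 ^ (2 - (m n + 5 : ℕ) : ℝ)) :
      ∑' p, zterm U T p - E.partialZ T s ≤ 2 ^ (-n : ℝ) :=
    (tsum_zterm_sub_sum_le U hT0 hT1 (E.stage s)).trans (rpow_one_div_le_two_rpow_neg hT0
      (sub_nonneg.2 (E.partialZ_le_tsum one_pos le_rfl s)) (hm n).2 h)
  obtain ⟨φ, hφ, hbits⟩ := exists_partrec_bits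
    (E.computableFamily_partialZ one_pos computableReal_one) (E.computableFamily_partialZ hT0 hTc)
    (tsum_nonneg (zterm_nonneg U 1)) (tsum_nonneg (zterm_nonneg U T))
    (E.tendsto_partialZ one_pos le_rfl) (E.partialZ_le_tsum hT0 hT1) hk htail
  obtain ⟨d, hd⟩ := hU.exists_H_le_add_sqrt
    (computable₂_add.comp hmc (Computable.const 8)) hφ
  have hlim : Tendsto (fun n : ℕ => (3 * n.sqrt + (8 + d : ℕ) : ℝ) / n) atTop (nhds 0) := by
    simpa [add_div, mul_div_assoc] using (tendsto_natSqrt_div_atTop.const_mul 3).add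
      (tendsto_const_div_atTop_nhds_zero_nat (8 + d : ℝ))
  refine dCompressible_of_H_le hlim fun n => ?_
  obtain ⟨e, he, hmem⟩ := hbits n
  have hH := hd n _ (four_mul_natFloor_add_lt (tsum_zterm_one_le_one U) he) _ hmem
  have hH' : (H U (bits (∑' p, zterm U T p) n) : ℝ) ≤ m n + 8 + 3 * n.sqrt + d := by
    exact_mod_cast hH
  push_cast
  linarith [(hm n).1]

end Compressible

/-- **Theorem (paper Thm 8(i)).** For computable `T` with `0 < T ≤ 1`, the
partition function `Z(T) = ∑_{p ∈ dom U} 2^{-|p|/T}` converges to a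
left-computable real which is weakly Chaitin `T`-random and `T`-compressible. -/
theorem Z_converges_random_compressible (U : Computer) (hU : IsOptimal U)
    (T : ℝ) (hT0 : 0 < T) (hT1 : T ≤ 1) (hTc : ComputableReal T) :
    Summable (zterm U T) ∧
    LeftComputable (∑' p, zterm U T p) ∧
    WeaklyChaitinRandom U T (∑' p, zterm U T p) ∧
    DCompressible U T (∑' p, zterm U T p) :=
  ⟨summable_zterm U hT0 hT1, leftComputable_tsum_zterm U hT0 hT1 hTc,
    weaklyChaitinRandom_tsum_zterm hU hT0 hT1 hTc, dCompressible_tsum_zterm hU hT0 hT1 hTc⟩
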